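/- Let D(x) and S(x) be polynomials with nonnegative integer coefficients such that D(1) > 0, S(1) > 0, and P := D + S has at least two nonzero coefficients. Define polynomials D_n, S_n by D_1 = D, S_1 = S and D_n(x) = (D(x)+S(x))·D_{n−1}(x) + D(x)·S_{n−1}(x), S_n(x) = S(x)·S_{n−1}(x), and set P_n := D_n + S_n, with coefficients P_n(x) = Σ_i p_i(n)x^i. Let e := P′(1)/P(1) and v := (−P′(1)² + P(1)·(P″(1)+P′(1)))/P(1)². Then v > 0 and the coefficient distributions of P_n are asymptotically normal with mean e·n and variance v·n: lim_{n→∞} sup_{x∈ℝ} | (1/P_n(1)) Σ_{0 ≤ i ≤ x√(v·n)+e·n} p_i(n) − (1/√(2π)) ∫_{−∞}^{x} e^{−u²/2} du | = 0. -/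

import Mathlib

open Polynomial Filter Set MeasureTheory

/-- Sum of the coefficients `p i` of `P` over indices `0 ≤ i ≤ y`. -/
noncomputable def cdfSum (P : Polynomial ℝ) (y : ℝ) : ℝ :=
  ∑ i ∈ P.support, if (i : ℝ) ≤ y then P.coeff i else 0

/-- The standard normal cumulative distribution function. -/
noncomputable def stdNormalCDF (x : ℝ) : ℝ :=
  (Real.sqrt (2 * Real.pi))⁻¹ * ∫ u in Set.Iic x, Real.exp (-u ^ 2 / 2)

/-- normalised coefficient measure -/
noncomputable def pmeas (P : Polynomial ℝ) (a s : ℝ) : Measure ℝ :=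
  ∑ i ∈ P.support, ENNReal.ofReal (P.coeff i / P.eval 1) • Measure.dirac (((i : ℝ) - a) / s)

lemma eval_one_sum (P : Polynomial ℝ) : P.eval 1 = ∑ i ∈ P.support, P.coeff i := by
  simp [Polynomial.eval_eq_sum, Polynomial.sum_def]

lemma deriv_one_sum (P : Polynomial ℝ) :
    P.derivative.eval 1 = ∑ i ∈ P.support, P.coeff i * i := by
  simp [Polynomial.derivative_eval, Polynomial.sum_def]

lemma deriv2_one_sum (P : Polynomial ℝ) :
    (derivative (derivative P)).eval 1 + P.derivative.eval 1
      = ∑ i ∈ P.support, P.coeff i * (i : ℝ) ^ 2 := by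
  have key : (derivative (derivative P)).eval 1 + P.derivative.eval 1
      = P.sum (fun i a => a * (i : ℝ) ^ 2) := by
    induction P using Polynomial.induction_on' with
    | add p q hp hq =>
      rw [Polynomial.sum_add_index _ _ _ (by simp) (by intros; ring), ← hp, ← hq]
      simp; ring
    | monomial n a =>
      rw [Polynomial.sum_monomial_index _ _ (by simp)]
      rcases n with _ | n
      · simp
      · simp [Polynomial.derivative_monomial]; ring
  rw [key, Polynomial.sum_def]

lemma pmeas_prob (P : Polynomial ℝ) (hc : ∀ i, 0 ≤ P.coeff i) (h1 : 0 < P.eval 1) (a s : ℝ) :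
    IsProbabilityMeasure (pmeas P a s) := by
  constructor
  simp only [pmeas, Measure.coe_finsetSum, Finset.sum_apply, Measure.smul_apply,
    measure_univ, smul_eq_mul, mul_one]
  rw [← ENNReal.ofReal_sum_of_nonneg (fun i _ => div_nonneg (hc i) h1.le), ← Finset.sum_div,
    ← eval_one_sum, div_self h1.ne', ENNReal.ofReal_one]

lemma pmeas_integral {E : Type*} [NormedAddCommGroup E] [NormedSpace ℝ E] [CompleteSpace E]
    (P : Polynomial ℝ) (hc : ∀ i, 0 ≤ P.coeff i) (h1 : 0 < P.eval 1)
    (a s : ℝ) (f : ℝ → E) :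
    ∫ x, f x ∂(pmeas P a s)
      = ∑ i ∈ P.support, (P.coeff i / P.eval 1) • f (((i : ℝ) - a) / s) := by
  rw [pmeas, integral_finsetSum_measure]
  · refine Finset.sum_congr rfl fun i _ => ?_
    rw [integral_smul_measure, integral_dirac, ENNReal.toReal_ofReal (div_nonneg (hc i) h1.le)]
  · intro i _
    exact Integrable.smul_measure (integrable_dirac (by simp)) ENNReal.ofReal_ne_top

lemma pmeas_cdf (P : Polynomial ℝ) (hc : ∀ i, 0 ≤ P.coeff i) (h1 : 0 < P.eval 1)
    (a s : ℝ) (hs : 0 < s) (x : ℝ) :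
    (pmeas P a s).real (Iic x) = cdfSum P (x * s + a) / P.eval 1 := by
  have h := pmeas_integral P hc h1 a s ((Iic x).indicator (fun _ => (1 : ℝ)))
  rw [integral_indicator_const _ measurableSet_Iic] at h
  simp only [smul_eq_mul, mul_one] at h
  rw [h, cdfSum, Finset.sum_div]
  refine Finset.sum_congr rfl fun i _ => ?_
  have : ((i : ℝ) - a) / s ≤ x ↔ (i : ℝ) ≤ x * s + a := by
    rw [div_le_iff₀ hs, sub_le_iff_le_add]
  by_cases hi : (i : ℝ) ≤ x * s + a
  · simp [Set.indicator, this, hi]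
  · simp [Set.indicator, this, hi]

lemma pmeas_charFun (P : Polynomial ℝ) (hc : ∀ i, 0 ≤ P.coeff i) (h1 : 0 < P.eval 1)
    (a s t : ℝ) :
    charFun (pmeas P a s) t = Complex.exp (-(t * (a / s) * Complex.I)) *
      (P.map Complex.ofRealHom).eval (Complex.exp (t / s * Complex.I)) / (P.eval 1 : ℝ) := by
  rw [charFun_apply_real, pmeas_integral P hc h1, Polynomial.eval_map, Polynomial.eval₂_eq_sum,
    Polynomial.sum_def, Finset.mul_sum, Finset.sum_div]
  refine Finset.sum_congr rfl fun i _ => ?_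
  rw [← Complex.exp_nat_mul, Complex.real_smul]
  have : Complex.exp (t * (((i : ℝ) - a) / s : ℝ) * Complex.I)
      = Complex.exp (-(t * (a / s) * Complex.I)) * Complex.exp (i * (t / s * Complex.I)) := by
    rw [← Complex.exp_add]; congr 1; push_cast; ring
  rw [this]
  simp only [Complex.ofRealHom_eq_coe]
  push_cast; ring

lemma pmeas_charFun_pow (P : Polynomial ℝ) (hc : ∀ i, 0 ≤ P.coeff i) (h1 : 0 < P.eval 1)
    (n : ℕ) (hn : 0 < n) (hcn : ∀ i, 0 ≤ (P ^ n).coeff i) (e v : ℝ) (t : ℝ) :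
    charFun (pmeas (P ^ n) (e * n) (√(v * n))) t
      = (charFun (pmeas P e √v) ((√n)⁻¹ * t)) ^ n := by
  have h1n : 0 < (P ^ n).eval 1 := by simpa using pow_pos h1 n
  rw [pmeas_charFun _ hcn h1n, pmeas_charFun _ hc h1, div_pow, mul_pow, ← Complex.exp_nat_mul,
    Polynomial.map_pow, Polynomial.eval_pow, Polynomial.eval_pow]
  have hn' : (0 : ℝ) < n := by exact_mod_cast hn
  have hsq : ((√(n : ℝ) : ℝ) : ℂ) ^ 2 = n := by
    rw [← Complex.ofReal_pow, Real.sq_sqrt hn'.le]; simp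
  have hne : ((√(n : ℝ) : ℝ) : ℂ) ≠ 0 := by
    exact_mod_cast (Real.sqrt_pos.2 hn').ne'
  rw [mul_comm v, Real.sqrt_mul hn'.le]
  have e1 : (-((t : ℂ) * ((e * n : ℝ) / (√(n : ℝ) * √v : ℝ)) * Complex.I))
     = n * (-((((√(n : ℝ))⁻¹ * t : ℝ) : ℂ) * (e / (√v : ℝ)) * Complex.I)) := by
    push_cast
    by_cases hv : ((√v : ℝ) : ℂ) = 0
    · simp [hv]
    · field_simp
  have e2 : ((t : ℂ) / (√(n : ℝ) * √v : ℝ) * Complex.I)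
     = ((((√(n : ℝ))⁻¹ * t : ℝ) : ℂ) / (√v : ℝ) * Complex.I) := by
    push_cast
    rw [mul_comm (((√(n : ℝ) : ℝ) : ℂ))⁻¹, div_mul_eq_div_div, div_eq_mul_inv (t : ℂ)]
  rw [e1, e2]
  push_cast; rfl

lemma polya (F : ℕ → ℝ → ℝ) (G : ℝ → ℝ) (hF : ∀ᶠ n in atTop, Monotone (F n))
    (hF0 : ∀ᶠ n in atTop, ∀ x, 0 ≤ F n x) (hF1 : ∀ᶠ n in atTop, ∀ x, F n x ≤ 1)
    (hG : Monotone G) (hGc : Continuous G) (hGb : Tendsto G atBot (nhds 0))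
    (hGt : Tendsto G atTop (nhds 1))
    (h : ∀ x, Tendsto (fun n => F n x) atTop (nhds (G x))) :
    Tendsto (fun n => ⨆ x, |F n x - G x|) atTop (nhds 0) := by
  have hG0 : ∀ x, 0 ≤ G x := fun x => hG.le_of_tendsto hGb x
  have hG1 : ∀ x, G x ≤ 1 := fun x => hG.ge_of_tendsto hGt x
  have hsurj : ∀ y, 0 < y → y < 1 → ∃ x, G x = y := by
    intro y h0 h1
    obtain ⟨a, ha⟩ := (hGb.eventually (gt_mem_nhds h0)).exists
    obtain ⟨b, hb⟩ := (hGt.eventually (lt_mem_nhds h1)).exists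
    exact mem_range_of_exists_le_of_exists_ge hGc ⟨a, ha.le⟩ ⟨b, hb.le⟩
  rw [Metric.tendsto_atTop']
  intro ε hε
  obtain ⟨k, hk⟩ := exists_nat_gt (3 / ε)
  have hk0 : (0 : ℝ) < k := lt_trans (by positivity) hk
  have hkε : 3 / (k : ℝ) < ε := by
    rw [div_lt_iff₀ hk0]; rw [div_lt_iff₀ hε] at hk; linarith
  have hch : ∀ j : ℕ, ∃ x, 0 < j → j < k → G x = j / k := by
    intro j
    by_cases hj : 0 < j ∧ j < k
    · obtain ⟨x, hx⟩ := hsurj (j / k) (by have := hj.1; positivity)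
        (by rw [div_lt_one hk0]; exact_mod_cast hj.2)
      exact ⟨x, fun _ _ => hx⟩
    · exact ⟨0, fun h1 h2 => absurd ⟨h1, h2⟩ hj⟩
  choose X hX using hch
  have hev : ∀ᶠ n in atTop, ∀ j ∈ Finset.range k, |F n (X j) - G (X j)| < 1 / k := by
    rw [Filter.eventually_all_finset]
    intro j _
    have := (Metric.tendsto_nhds.1 (h (X j))) (1 / k) (by positivity)
    simpa [Real.dist_eq] using this
  have hfin : ∀ᶠ n in atTop, ∀ x, |F n x - G x| ≤ 2 / k := by
    filter_upwards [hev, hF, hF0, hF1] with n hn hm h0 h1 x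
    have hlin : (2 : ℝ) / k = 2 * (1 / k) := by ring
    rw [abs_le]
    constructor
    · by_cases hc : k * G x ≤ 2
      · have : G x ≤ 2 / k := by rw [le_div_iff₀ hk0]; linarith
        linarith [h0 x]
      · push Not at hc
        set j := ⌈(k : ℝ) * G x⌉₊ - 1 with hj
        have hc2 : 2 < ⌈(k : ℝ) * G x⌉₊ := by rw [Nat.lt_ceil]; exact_mod_cast hc
        have hc3 : ⌈(k : ℝ) * G x⌉₊ ≤ k := by
          rw [Nat.ceil_le]; nlinarith [hG1 x]
        have hj1 : j + 1 = ⌈(k : ℝ) * G x⌉₊ := by omega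
        have a1 : (j : ℝ) < k * G x := by rw [← Nat.lt_ceil]; omega
        have a2 : (k : ℝ) * G x ≤ j + 1 := by
          have := Nat.le_ceil ((k : ℝ) * G x); rw [← hj1] at this; exact_mod_cast this
        have hGj := hX j (by omega) (by omega)
        have b1 : G (X j) < G x := by rw [hGj, div_lt_iff₀ hk0]; linarith
        have b2 : X j ≤ x := by
          by_contra hcon; push Not at hcon; exact absurd (hG hcon.le) (not_le.2 b1)
        have b3 := hm b2
        have b4 := (abs_lt.1 (hn j (by simp; omega))).1
        have b5 : G x ≤ G (X j) + 1 / k := by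
          rw [hGj, ← add_div, le_div_iff₀ hk0]; linarith
        linarith
    · set j := ⌊(k : ℝ) * G x⌋₊ + 1 with hj
      have hnn : 0 ≤ (k : ℝ) * G x := mul_nonneg hk0.le (hG0 x)
      have a1 : (k : ℝ) * G x < j := by rw [hj]; push_cast; exact Nat.lt_floor_add_one _
      have a2 : (j : ℝ) ≤ k * G x + 1 := by
        rw [hj]; push_cast; linarith [Nat.floor_le hnn]
      by_cases hc : j < k
      · have hGj := hX j (by omega) hc
        have b1 : G x < G (X j) := by rw [hGj, lt_div_iff₀ hk0]; linarith
        have b2 : x ≤ X j := by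
          by_contra hcon; push Not at hcon; exact absurd (hG hcon.le) (not_le.2 b1)
        have b3 := hm b2
        have b4 := (abs_lt.1 (hn j (by simpa using hc))).2
        have b5 : G (X j) ≤ G x + 1 / k := by
          rw [hGj, div_le_iff₀ hk0, add_mul, one_div, inv_mul_cancel₀ hk0.ne']; linarith
        linarith
      · push Not at hc
        have hc' : (k : ℝ) ≤ j := by exact_mod_cast hc
        have : 1 - 1 / k ≤ G x := by
          have : 1 ≤ G x + 1 / k := by
            have : (k : ℝ) * 1 ≤ k * (G x + 1 / k) := by
              rw [mul_add, mul_one_div, div_self hk0.ne']; linarith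
            exact le_of_mul_le_mul_left this hk0
          linarith
        have : (0 : ℝ) < 1 / k := by positivity
        linarith [h1 x]
  obtain ⟨N, hN⟩ := eventually_atTop.1 hfin
  refine ⟨N, fun n hn => ?_⟩
  have hle : (⨆ x, |F n x - G x|) ≤ 2 / k := ciSup_le (hN n hn.le)
  have hge : 0 ≤ ⨆ x, |F n x - G x| := Real.iSup_nonneg fun x => abs_nonneg _
  rw [Real.dist_eq, sub_zero, abs_of_nonneg hge]
  have : (2 : ℝ) / k ≤ 3 / k := by gcongr; norm_num
  linarith

lemma stdNormal_eq (x : ℝ) :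
    stdNormalCDF x = (ProbabilityTheory.gaussianReal 0 1).real (Iic x) := by
  rw [Measure.real, ProbabilityTheory.gaussianReal_apply_eq_integral 0 one_ne_zero,
    ENNReal.toReal_ofReal
      (setIntegral_nonneg measurableSet_Iic fun u _ => ProbabilityTheory.gaussianPDFReal_nonneg _ _ _)]
  simp [stdNormalCDF, ProbabilityTheory.gaussianPDFReal, integral_const_mul]

lemma gauss_cont : Continuous stdNormalCDF := by
  have hint : Integrable (fun u : ℝ => Real.exp (-u ^ 2 / 2)) := by
    have := integrable_exp_neg_mul_sq (b := 1 / 2) (by norm_num)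
    convert this using 3
    ring
  have h2 : Continuous fun x : ℝ => ∫ u in Iic x, Real.exp (-u ^ 2 / 2) := by
    have h : ∀ x : ℝ, ∫ u in Iic x, Real.exp (-u ^ 2 / 2)
        = (∫ u in Iic (0 : ℝ), Real.exp (-u ^ 2 / 2)) + ∫ u in (0 : ℝ)..x, Real.exp (-u ^ 2 / 2) := by
      intro x
      rw [← intervalIntegral.integral_Iic_sub_Iic hint.integrableOn hint.integrableOn]; ring
    rw [funext h]
    exact continuous_const.add
      (intervalIntegral.continuous_primitive (fun a b => hint.intervalIntegrable) 0)
  exact continuous_const.mul h2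

theorem pathlike_genus_asymptotically_normal
    (Dp Sp : Polynomial ℝ)
    (hDcoeff : ∀ i, ∃ m : ℕ, Dp.coeff i = (m : ℝ))
    (hScoeff : ∀ i, ∃ m : ℕ, Sp.coeff i = (m : ℝ))
    (hD1 : 0 < Dp.eval 1) (hS1 : 0 < Sp.eval 1)
    (hsupp : 2 ≤ (Dp + Sp).support.card)
    (Dn Sn Pn : ℕ → Polynomial ℝ)
    (hDn1 : Dn 1 = Dp) (hSn1 : Sn 1 = Sp)
    (hDnrec : ∀ n, 2 ≤ n → Dn n = (Dp + Sp) * Dn (n - 1) + Dp * Sn (n - 1))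
    (hSnrec : ∀ n, 2 ≤ n → Sn n = Sp * Sn (n - 1))
    (hPn : ∀ n, Pn n = Dn n + Sn n)
    (e v : ℝ)
    (he : e = (Dp + Sp).derivative.eval 1 / (Dp + Sp).eval 1)
    (hv : v = (-((Dp + Sp).derivative.eval 1) ^ 2 +
        (Dp + Sp).eval 1 *
          ((Polynomial.derivative (Polynomial.derivative (Dp + Sp))).eval 1 +
            (Dp + Sp).derivative.eval 1)) / ((Dp + Sp).eval 1) ^ 2) :
    0 < v ∧
    Filter.Tendsto (fun n : ℕ => ⨆ x : ℝ,
        |cdfSum (Pn n) (x * Real.sqrt (v * n) + e * n) / (Pn n).eval 1 - stdNormalCDF x|)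
      Filter.atTop (nhds 0) := by
  have hc : ∀ i, 0 ≤ (Dp + Sp).coeff i := by
    intro i
    obtain ⟨m, hm⟩ := hDcoeff i
    obtain ⟨l, hl⟩ := hScoeff i
    rw [Polynomial.coeff_add, hm, hl]; positivity
  have h1 : 0 < (Dp + Sp).eval 1 := by rw [Polynomial.eval_add]; positivity
  have hpow : ∀ n, 1 ≤ n → Pn n = (Dp + Sp) ^ n := by
    intro n hn
    induction n, hn using Nat.le_induction with
    | base => rw [hPn, hDn1, hSn1, pow_one]
    | succ n hn ih =>
      rw [hPn, hDnrec (n + 1) (by omega), hSnrec (n + 1) (by omega), Nat.add_sub_cancel, pow_succ, ← ih, hPn]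
      ring
  generalize Dp + Sp = P at *
  have hcn : ∀ n i, 0 ≤ (P ^ n).coeff i := by
    intro n
    induction n with
    | zero => intro i; rw [pow_zero, Polynomial.coeff_one]; split_ifs <;> norm_num
    | succ n ih =>
      intro i
      rw [pow_succ, Polynomial.coeff_mul]
      exact Finset.sum_nonneg fun x _ => mul_nonneg (ih _) (hc _)
  have h1n : ∀ n, 0 < (P ^ n).eval 1 := fun n => by simpa using pow_pos h1 n
  -- the variance as a sum of squares
  have hmean : ∑ i ∈ P.support, P.coeff i / P.eval 1 * ((i : ℝ) - e) = 0 := by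
    have : ∑ i ∈ P.support, P.coeff i / P.eval 1 * ((i : ℝ) - e)
        = (∑ i ∈ P.support, P.coeff i * i) / P.eval 1
          - (∑ i ∈ P.support, P.coeff i) / P.eval 1 * e := by
      rw [Finset.sum_div, Finset.sum_div, Finset.sum_mul, ← Finset.sum_sub_distrib]
      exact Finset.sum_congr rfl fun i _ => by ring
    rw [this, ← deriv_one_sum, ← eval_one_sum, div_self h1.ne', he]; ring
  have hvar : ∑ i ∈ P.support, P.coeff i / P.eval 1 * ((i : ℝ) - e) ^ 2 = v := by
    have : ∑ i ∈ P.support, P.coeff i / P.eval 1 * ((i : ℝ) - e) ^ 2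
        = (∑ i ∈ P.support, P.coeff i * (i : ℝ) ^ 2) / P.eval 1
          - (∑ i ∈ P.support, P.coeff i * i) / P.eval 1 * (2 * e)
          + (∑ i ∈ P.support, P.coeff i) / P.eval 1 * e ^ 2 := by
      rw [Finset.sum_div, Finset.sum_div, Finset.sum_div, Finset.sum_mul, Finset.sum_mul,
        ← Finset.sum_sub_distrib, ← Finset.sum_add_distrib]
      exact Finset.sum_congr rfl fun i _ => by ring
    rw [this, ← deriv2_one_sum, ← deriv_one_sum, ← eval_one_sum, he, hv]
    have := h1.ne'
    field_simp
    ring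
  have hv0 : 0 < v := by
    rw [← hvar]
    obtain ⟨i, hi, j, hj, hij⟩ := Finset.one_lt_card.1 hsupp
    have hpos : ∀ i ∈ P.support, 0 < P.coeff i / P.eval 1 := fun i hi =>
      div_pos (lt_of_le_of_ne (hc i) (Ne.symm (Polynomial.mem_support_iff.1 hi))) h1
    apply Finset.sum_pos' (fun i hi => mul_nonneg (hpos i hi).le (sq_nonneg _))
    by_cases hie : (i : ℝ) = e
    · refine ⟨j, hj, mul_pos (hpos j hj) (sq_pos_of_ne_zero ?_)⟩
      intro hje
      apply hij
      have : (i : ℝ) = j := by linarith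
      exact_mod_cast this
    · exact ⟨i, hi, mul_pos (hpos i hi) (sq_pos_of_ne_zero (sub_ne_zero.2 hie))⟩
  refine ⟨hv0, ?_⟩
  have hsv : 0 < √v := Real.sqrt_pos.2 hv0
  have hprob1 : IsProbabilityMeasure (pmeas P e √v) := pmeas_prob P hc h1 _ _
  have hm0 : ∫ x, (id x : ℝ) ∂(pmeas P e √v) = 0 := by
    rw [pmeas_integral P hc h1]
    simp only [id, smul_eq_mul, ← mul_div_assoc]
    rw [← Finset.sum_div, hmean, zero_div]
  have hm1 : ∫ x, ((id : ℝ → ℝ) ^ 2) x ∂(pmeas P e √v) = 1 := by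
    rw [pmeas_integral P hc h1]
    simp only [Pi.pow_apply, id, smul_eq_mul, div_pow, Real.sq_sqrt hv0.le, ← mul_div_assoc]
    rw [← Finset.sum_div, hvar, div_self hv0.ne']
  let μ : ℕ → ProbabilityMeasure ℝ := fun n =>
    ⟨pmeas (P ^ n) (e * n) (√(v * n)), pmeas_prob _ (hcn n) (h1n n) _ _⟩
  let γ : ProbabilityMeasure ℝ := ⟨ProbabilityTheory.gaussianReal 0 1, inferInstance⟩
  have hconv : Tendsto μ atTop (nhds γ) := by
    refine ProbabilityMeasure.tendsto_iff_tendsto_charFun.2 fun t => ?_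
    have hcl := ProbabilityTheory.tendsto_charFun_inv_sqrt_mul_pow
      (P := pmeas P e √v) (X := id) aemeasurable_id hm0 hm1 t
    rw [Measure.map_id] at hcl
    have hg : charFun (γ : Measure ℝ) t = Complex.exp (-t ^ 2 / 2) := by
      simp [γ, ProbabilityTheory.charFun_gaussianReal, neg_div]
    rw [hg]
    refine hcl.congr' ?_
    filter_upwards [eventually_gt_atTop 0] with n hn
    exact (pmeas_charFun_pow P hc h1 n hn (hcn n) e v t).symm
  have hF : ∀ᶠ n : ℕ in atTop, ∀ x, cdfSum (Pn n) (x * √(v * n) + e * n) / (Pn n).eval 1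
      = (μ n : Measure ℝ).real (Iic x) := by
    filter_upwards [eventually_gt_atTop 0] with n hn x
    have hn' : (0 : ℝ) < n := by exact_mod_cast hn
    rw [hpow n hn]
    exact (pmeas_cdf _ (hcn n) (h1n n) _ _ (Real.sqrt_pos.2 (mul_pos hv0 hn')) x).symm
  have hGe : stdNormalCDF = fun x => (γ : Measure ℝ).real (Iic x) := funext stdNormal_eq
  have hGcdf : stdNormalCDF = ProbabilityTheory.cdf (ProbabilityTheory.gaussianReal 0 1) := by
    funext x; rw [stdNormal_eq, ProbabilityTheory.cdf_eq_real]
  have hmain : Tendsto (fun n => ⨆ x, |(μ n : Measure ℝ).real (Iic x) - stdNormalCDF x|)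
      atTop (nhds 0) := by
    refine polya _ _ (.of_forall fun n x y hxy => measureReal_mono (Iic_subset_Iic.2 hxy))
      (.of_forall fun n x => measureReal_nonneg) (.of_forall fun n x => measureReal_le_one)
      ?_ gauss_cont ?_ ?_ ?_
    · rw [hGcdf]; exact ProbabilityTheory.monotone_cdf _
    · rw [hGcdf]; exact ProbabilityTheory.tendsto_cdf_atBot _
    · rw [hGcdf]; exact ProbabilityTheory.tendsto_cdf_atTop _
    · intro x
      rw [stdNormal_eq]
      have hfr : (γ : Measure ℝ) (frontier (Iic x)) = 0 := by
        have : NullSingletonClass (γ : Measure ℝ) :=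
          ProbabilityTheory.nullSingletonClass_gaussianReal one_ne_zero
        rw [frontier_Iic]
        exact measure_singleton x
      have := ProbabilityMeasure.tendsto_measure_of_null_frontier_of_tendsto' hconv hfr
      exact (ENNReal.tendsto_toReal (measure_ne_top _ _)).comp this
  refine hmain.congr' ?_
  filter_upwards [hF] with n hn
  simp_rw [hn]
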